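/- Let φ ∈ C_c^∞(ℝ³) and for s ∈ ℝ set g_s := id + s∇φ. Then there exists s₀ > 0 such that for every s with |s| < s₀ and every Borel probability measure ν on ℝ³ with finite second moment, the coupling γ_s := (id × g_s)#ν is an optimal coupling for the quadratic cost between ν and the pushforward ν_s := g_s#ν, and consequently W₂²(ν, ν_s) = ∫ ‖y − g_s(y)‖² dν(y) = s² ∫ ‖∇φ(y)‖² dν(y). -/

import Mathlib

open MeasureTheory ENNReal NNReal

noncomputable section

abbrev E3 := EuclideanSpace ℝ (Fin 3)

/-- `γ` is a coupling of `μ` and `ν`. -/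
def IsCoupling (γ : Measure (E3 × E3)) (μ ν : Measure E3) : Prop :=
  γ.map Prod.fst = μ ∧ γ.map Prod.snd = ν

/-- The squared 2-Wasserstein distance. -/
def W2sq (μ ν : Measure E3) : ℝ :=
  sInf {c | ∃ γ : Measure (E3 × E3), IsProbabilityMeasure γ ∧ IsCoupling γ μ ν ∧
    c = ∫ q, ‖q.1 - q.2‖^2 ∂γ}

/-!
The map `g_s = id + s∇φ` is the gradient of `u = ‖·‖² / 2 + sφ`, and as soon as `|s|` times the
Lipschitz constant of `∇φ` is at most `1` this gradient is monotone, so that `u` lies above its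
tangent planes. Completing squares, the tangent inequality becomes the dual inequality
`‖y - g_s y‖² - f y ≤ ‖x - g_s y‖² - f x` with `f = ‖·‖² - 2u`. Every coupling `γ` of `ν` and
`g_s#ν` is the law of `(x, g_s y)` for a pair `(x, y)` whose two marginals are `ν`; integrating the
dual inequality against the law of that pair cancels `f` and bounds the cost of `γ` from below.
-/

section Couplings

open ProbabilityTheory

variable {α β Ω : Type*} [MeasurableSpace α] [MeasurableSpace β] [MeasurableSpace Ω]

/-- Couplings of two measures, possibly living on different spaces. On `E3` this unfolds to
`IsCoupling`. -/
def IsTransportPlan (γ : Measure (α × β)) (μ : Measure α) (ν : Measure β) : Prop :=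
  γ.fst = μ ∧ γ.snd = ν

lemma isTransportPlan_map_prodMk (ν : Measure α) {g : α → β} (hg : Measurable g) :
    IsTransportPlan (ν.map fun y => (y, g y)) ν (ν.map g) :=
  ⟨(Measure.fst_map_prodMk hg).trans Measure.map_id, Measure.snd_map_prodMk measurable_id⟩

lemma map_compProd_comap (ν : Measure α) [SFinite ν] {g : α → β} (hg : Measurable g)
    (κ : Kernel β Ω) [IsSFiniteKernel κ] :
    (ν ⊗ₘ κ.comap g hg).map (Prod.map g id) = ν.map g ⊗ₘ κ := by
  refine Measure.ext_of_lintegral _ fun f hf => ?_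
  rw [lintegral_map hf (by fun_prop), Measure.lintegral_compProd (by fun_prop),
    Measure.lintegral_compProd hf, lintegral_map hf.lintegral_kernel_prod_right' hg]
  rfl

/-- Draw `y` from `ν`, then `x` from the conditional law under `γ` of the first coordinate given
that the second one is `g y`. -/
lemma exists_fst_eq_and_map_eq_of_snd_eq_map [StandardBorelSpace Ω] [Nonempty Ω]
    {γ : Measure (Ω × β)} [IsFiniteMeasure γ] {ν : Measure α} [SFinite ν] {g : α → β}
    (hg : Measurable g) (hγ : γ.snd = ν.map g) :
    ∃ π : Measure (α × Ω), π.fst = ν ∧ π.map (fun p => (p.2, g p.1)) = γ := by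
  set κ : Kernel β Ω := condDistrib Prod.fst Prod.snd γ
  refine ⟨ν ⊗ₘ κ.comap g hg, Measure.fst_compProd _ _, ?_⟩
  calc (ν ⊗ₘ κ.comap g hg).map (fun p => (p.2, g p.1))
      = ((ν ⊗ₘ κ.comap g hg).map (Prod.map g id)).map Prod.swap :=
        (Measure.map_map measurable_swap (hg.prodMap measurable_id)).symm
    _ = (γ.snd ⊗ₘ κ).map Prod.swap := by rw [map_compProd_comap, hγ]
    _ = (γ.map Prod.swap).map Prod.swap :=
        congrArg _ (compProd_map_condDistrib measurable_fst.aemeasurable)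
    _ = γ := by rw [Measure.map_map measurable_swap measurable_swap]; exact Measure.map_id

lemma integral_comp_eq_of_measurePreserving {μ : Measure α} {ν : Measure β} {T : α → β}
    (hT : MeasurePreserving T μ ν) {h : β → ℝ} (hh : AEStronglyMeasurable h ν) :
    ∫ x, h (T x) ∂μ = ∫ y, h y ∂ν := by
  rw [← hT.map_eq] at hh ⊢
  exact (integral_map hT.aemeasurable hh).symm

lemma IsTransportPlan.integral_cost_le_of_dual [StandardBorelSpace α] [Nonempty α]
    {γ : Measure (α × β)} [IsFiniteMeasure γ] {ν : Measure α} [SFinite ν] {g : α → β}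
    (hγ : IsTransportPlan γ ν (ν.map g)) (hg : Measurable g) {c : α × β → ℝ} {f : α → ℝ}
    (hcγ : Integrable c γ) (hcg : Integrable (fun y => c (y, g y)) ν) (hf : Integrable f ν)
    (hdual : ∀ x y, c (y, g y) - f y ≤ c (x, g y) - f x) :
    ∫ y, c (y, g y) ∂ν ≤ ∫ q, c q ∂γ := by
  obtain ⟨π, hπν, hπγ⟩ := exists_fst_eq_and_map_eq_of_snd_eq_map hg hγ.2
  have hpair : MeasurePreserving (fun p : α × α => (p.2, g p.1)) π γ := ⟨by fun_prop, hπγ⟩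
  have hy : MeasurePreserving Prod.fst π ν := ⟨measurable_fst, hπν⟩
  have hx : MeasurePreserving Prod.snd π ν := by
    rw [← hγ.1]
    exact (measurable_fst.measurePreserving γ).comp hpair
  have hmono : ∫ p, (c (p.1, g p.1) - f p.1) ∂π ≤ ∫ p, (c (p.2, g p.1) - f p.2) ∂π :=
    integral_mono (hy.integrable_comp_of_integrable (hcg.sub hf))
      ((hpair.integrable_comp_of_integrable hcγ).sub (hx.integrable_comp_of_integrable hf))
      fun p => hdual p.2 p.1
  have hleft : ∫ p, (c (p.1, g p.1) - f p.1) ∂π = ∫ y, c (y, g y) ∂ν - ∫ y, f y ∂ν :=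
    (integral_comp_eq_of_measurePreserving hy (hcg.sub hf).1).trans (integral_sub hcg hf)
  have hright : ∫ p, (c (p.2, g p.1) - f p.2) ∂π = ∫ q, c q ∂γ - ∫ x, f x ∂ν := by
    rw [← integral_comp_eq_of_measurePreserving hpair hcγ.1,
      ← integral_comp_eq_of_measurePreserving hx hf.1]
    exact integral_sub (hpair.integrable_comp_of_integrable hcγ)
      (hx.integrable_comp_of_integrable hf)
  linarith

end Couplings

lemma memLp_comp_of_lipschitzWith {α E F : Type*} [MeasurableSpace α] [NormedAddCommGroup E]
    [NormedAddCommGroup F] {v : E → F} {L : ℝ≥0} (hv : LipschitzWith L v) {μ : Measure α}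
    [IsFiniteMeasure μ] {p : ℝ≥0∞} {f : α → E} (hf : MemLp f p μ) :
    MemLp (fun x => v (f x)) p μ := by
  have hlip : LipschitzWith L fun x => v x - v 0 :=
    LipschitzWith.of_dist_le_mul fun x y => by
      simpa only [dist_sub_right] using hv.dist_le_mul x y
  simpa only [Pi.add_def, Function.comp_apply, sub_add_cancel] using
    (hlip.comp_memLp (sub_self _) hf).add (memLp_const (v 0))

section OptimalPlans

variable {E : Type*} [NormedAddCommGroup E] [MeasurableSpace E]

/-- The quadratic transport cost of a plan; by the convention for the Bochner integral it is `0`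
when the cost function is not integrable. -/
def quadraticCost (γ : Measure (E × E)) : ℝ :=
  ∫ q, ‖q.1 - q.2‖ ^ 2 ∂γ

/-- Couplings that minimize the quadratic cost among all probability couplings. -/
def IsOptimalPlan (γ : Measure (E × E)) (μ ν : Measure E) : Prop :=
  IsTransportPlan γ μ ν ∧ ∀ γ' : Measure (E × E), IsProbabilityMeasure γ' →
    IsTransportPlan γ' μ ν → quadraticCost γ ≤ quadraticCost γ'

/-- The squared 2-Wasserstein distance. On `E3` this unfolds to `W2sq`. -/
def wassersteinSq (μ ν : Measure E) : ℝ :=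
  sInf {c | ∃ γ : Measure (E × E), IsProbabilityMeasure γ ∧ IsTransportPlan γ μ ν ∧
    c = quadraticCost γ}

lemma IsOptimalPlan.wassersteinSq_eq {γ : Measure (E × E)} [IsProbabilityMeasure γ]
    {μ ν : Measure E} (hγ : IsOptimalPlan γ μ ν) : wassersteinSq μ ν = quadraticCost γ := by
  refine IsLeast.csInf_eq ⟨⟨γ, inferInstance, hγ.1, rfl⟩, ?_⟩
  rintro _ ⟨γ', hprob, hplan, rfl⟩
  exact hγ.2 γ' hprob hplan

lemma IsTransportPlan.integrable_norm_sub_sq {γ : Measure (E × E)} {μ ν : Measure E}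
    (hγ : IsTransportPlan γ μ ν) (hμ : MemLp id 2 μ) (hν : MemLp id 2 ν) :
    Integrable (fun q => ‖q.1 - q.2‖ ^ 2) γ :=
  ((hμ.comp_measurePreserving ⟨measurable_fst, hγ.1⟩).sub
    (hν.comp_measurePreserving ⟨measurable_snd, hγ.2⟩)).integrable_norm_pow two_ne_zero

variable [BorelSpace E] [SecondCountableTopology E]

lemma quadraticCost_map_prodMk (ν : Measure E) {g : E → E} (hg : Measurable g) :
    quadraticCost (ν.map fun y => (y, g y)) = ∫ y, ‖y - g y‖ ^ 2 ∂ν :=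
  integral_map (by fun_prop) (by fun_prop)

end OptimalPlans

section Subgradients

open scoped RealInnerProductSpace Gradient

variable {E : Type*} [NormedAddCommGroup E] [InnerProductSpace ℝ E]

/-- `g` selects a subgradient of `u` at every point: the affine function touching `u` at `y` with
slope `g y` stays below `u`. -/
def IsSubgradientField (u : E → ℝ) (g : E → E) : Prop :=
  ∀ x y, u y + ⟪g y, x - y⟫ ≤ u x

lemma isSubgradientField_of_hasGradientAt_of_monotone [CompleteSpace E] {u : E → ℝ} {g : E → E}
    (hu : ∀ x, HasGradientAt u (g x) x) (hg : ∀ x y, 0 ≤ ⟪g x - g y, x - y⟫) :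
    IsSubgradientField u g := by
  intro x y
  obtain ⟨z, hz, hmvt⟩ := domain_mvt
    (fun w _ => (hu w).hasFDerivAt.hasFDerivWithinAt) (convex_segment y x)
    (left_mem_segment ℝ y x) (right_mem_segment ℝ y x)
  rw [InnerProductSpace.toDual_apply_apply] at hmvt
  have hslope : 0 ≤ ⟪g z - g y, x - y⟫ := by
    rw [segment_eq_image'] at hz
    obtain ⟨t, ⟨ht, -⟩, rfl⟩ := hz
    rcases ht.eq_or_lt with rfl | ht
    · simp
    · have h := hg (y + t • (x - y)) y
      rw [add_sub_cancel_left, real_inner_smul_right] at h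
      exact nonneg_of_mul_nonneg_right h ht
  rw [inner_sub_left] at hslope
  linarith

lemma IsSubgradientField.norm_sub_sq_sub_le {u : E → ℝ} {g : E → E}
    (h : IsSubgradientField u g) (x y : E) :
    ‖y - g y‖ ^ 2 - (‖y‖ ^ 2 - 2 * u y) ≤ ‖x - g y‖ ^ 2 - (‖x‖ ^ 2 - 2 * u x) := by
  have hxy := h x y
  rw [inner_sub_right, real_inner_comm, real_inner_comm y] at hxy
  rw [norm_sub_sq_real, norm_sub_sq_real]
  linarith

variable [MeasurableSpace E]

lemma IsSubgradientField.integrable {u : E → ℝ} {g : E → E} (h : IsSubgradientField u g)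
    {ν : Measure E} [IsFiniteMeasure ν] (hu : AEStronglyMeasurable u ν) (hid : MemLp id 2 ν)
    (hg : MemLp g 2 ν) : Integrable u ν := by
  have hlower : Integrable (fun x => u 0 + ⟪g 0, x⟫) ν :=
    (integrable_const _).add ((hid.integrable one_le_two).const_inner (g 0))
  have hinner : Integrable (fun x => ⟪g x, x⟫) ν :=
    (hg.norm.integrable_mul hid.norm).mono' (hg.1.inner hid.1)
      (.of_forall fun x => norm_inner_le_norm (g x) x)
  refine integrable_of_le_of_le hu (.of_forall fun x => ?_) (.of_forall fun x => ?_) hlower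
    ((integrable_const (u 0)).add hinner)
  · simpa only [sub_zero] using h x 0
  · have h0 := h 0 x
    rw [zero_sub, inner_neg_right] at h0
    simp only [Pi.add_apply]
    linarith

variable [BorelSpace E] [CompleteSpace E] [SecondCountableTopology E]

theorem IsSubgradientField.isOptimalPlan {u : E → ℝ} {g : E → E} (h : IsSubgradientField u g)
    {ν : Measure E} [IsFiniteMeasure ν] (hu : AEStronglyMeasurable u ν) (hgm : Measurable g)
    (hid : MemLp id 2 ν) (hg : MemLp g 2 ν) :
    IsOptimalPlan (ν.map fun y => (y, g y)) ν (ν.map g) := by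
  refine ⟨isTransportPlan_map_prodMk ν hgm, fun γ _ hγ => ?_⟩
  have hgν : MemLp id 2 (ν.map g) :=
    (memLp_map_measure_iff aestronglyMeasurable_id hgm.aemeasurable).2 hg
  have hpot : Integrable (fun x => ‖x‖ ^ 2 - 2 * u x) ν :=
    (hid.integrable_norm_pow two_ne_zero).sub ((h.integrable hu hid hg).const_mul 2)
  rw [quadraticCost_map_prodMk ν hgm]
  exact hγ.integral_cost_le_of_dual hgm (c := fun q => ‖q.1 - q.2‖ ^ 2)
    (hγ.integrable_norm_sub_sq hid hgν) ((hid.sub hg).integrable_norm_pow two_ne_zero) hpot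
    h.norm_sub_sq_sub_le

end Subgradients

section GradientPerturbations

open scoped RealInnerProductSpace Gradient

variable {E : Type*} [NormedAddCommGroup E] [InnerProductSpace ℝ E]

lemma inner_add_smul_sub_nonneg {v : E → E} {L : ℝ≥0} (hv : LipschitzWith L v) {s : ℝ}
    (hs : |s| * L ≤ 1) (x y : E) : 0 ≤ ⟪x + s • v x - (y + s • v y), x - y⟫ := by
  have hle : |s * ⟪v x - v y, x - y⟫| ≤ ‖x - y‖ ^ 2 :=
    calc |s * ⟪v x - v y, x - y⟫| = |s| * |⟪v x - v y, x - y⟫| := abs_mul _ _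
      _ ≤ |s| * (‖v x - v y‖ * ‖x - y‖) := by gcongr; exact abs_real_inner_le_norm _ _
      _ ≤ |s| * (L * ‖x - y‖ * ‖x - y‖) := by gcongr; exact hv.norm_sub_le x y
      _ = |s| * L * ‖x - y‖ ^ 2 := by ring
      _ ≤ ‖x - y‖ ^ 2 := mul_le_of_le_one_left (by positivity) hs
  rw [add_sub_add_comm, ← smul_sub, inner_add_left, real_inner_smul_left,
    real_inner_self_eq_norm_sq]
  linarith [neg_le_of_abs_le hle]

variable [CompleteSpace E]

lemma hasGradientAt_half_norm_sq_add_mul {φ : E → ℝ} {x : E} (hφ : DifferentiableAt ℝ φ x) (s : ℝ) :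
    HasGradientAt (fun x => 1 / 2 * ‖x‖ ^ 2 + s * φ x) (x + s • ∇ φ x) x := by
  rw [hasGradientAt_iff_hasFDerivAt]
  refine (((hasStrictFDerivAt_norm_sq x).hasFDerivAt.const_mul (1 / 2)).add
    (hφ.hasFDerivAt.const_mul s)).congr_fderiv ?_
  ext y
  simp [toDual_gradient]

lemma exists_lipschitzWith_gradient {φ : E → ℝ} (hφ : ContDiff ℝ 2 φ)
    (hφc : HasCompactSupport φ) : ∃ L : ℝ≥0, LipschitzWith L (∇ φ) := by
  obtain ⟨L, hL⟩ := ContDiff.lipschitzWith_of_hasCompactSupport (hφc.fderiv ℝ)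
    (hφ.fderiv_right (m := 1) (by norm_num)) one_ne_zero
  exact ⟨1 * L, (InnerProductSpace.toDual ℝ E).symm.lipschitz.comp hL⟩

variable [MeasurableSpace E] [BorelSpace E] [SecondCountableTopology E]

theorem pushforward_coupling_optimal_general {φ : E → ℝ} (hφ : Differentiable ℝ φ) {L : ℝ≥0}
    (hL : LipschitzWith L (∇ φ)) {s : ℝ} (hs : |s| * L ≤ 1) (ν : Measure E)
    [IsProbabilityMeasure ν] (hν : Integrable (fun x => ‖x‖ ^ 2) ν) :
    IsOptimalPlan (ν.map fun y => (y, y + s • ∇ φ y)) ν (ν.map fun y => y + s • ∇ φ y) ∧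
      wassersteinSq ν (ν.map fun y => y + s • ∇ φ y) = ∫ y, ‖y - (y + s • ∇ φ y)‖ ^ 2 ∂ν ∧
      wassersteinSq ν (ν.map fun y => y + s • ∇ φ y) = s ^ 2 * ∫ y, ‖∇ φ y‖ ^ 2 ∂ν := by
  have hid : MemLp id 2 ν := (memLp_two_iff_integrable_sq_norm aestronglyMeasurable_id).2 hν
  have hsub : IsSubgradientField (fun x => 1 / 2 * ‖x‖ ^ 2 + s * φ x) fun y => y + s • ∇ φ y :=
    isSubgradientField_of_hasGradientAt_of_monotone
      (fun x => hasGradientAt_half_norm_sq_add_mul (hφ x) s) (inner_add_smul_sub_nonneg hL hs)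
  have hφm : Measurable φ := hφ.continuous.measurable
  have hgm : Measurable fun y => y + s • ∇ φ y :=
    measurable_id.add (hL.continuous.measurable.const_smul s)
  have hopt := hsub.isOptimalPlan (ν := ν) (by fun_prop) hgm hid
    (hid.add ((memLp_comp_of_lipschitzWith hL hid).const_smul s))
  have : IsProbabilityMeasure (ν.map fun y => (y, y + s • ∇ φ y)) :=
    Measure.isProbabilityMeasure_map (by fun_prop)
  have hW := hopt.wassersteinSq_eq.trans (quadraticCost_map_prodMk ν hgm)
  refine ⟨hopt, hW, hW.trans ?_⟩
  simp only [sub_add_cancel_left, norm_neg, norm_smul, mul_pow, Real.norm_eq_abs, sq_abs,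
    integral_const_mul]

end GradientPerturbations

/-- For `φ ∈ C_c^∞(ℝ³)` and `g_s := id + s∇φ` with `|s|` small, the coupling
`(id × g_s)#ν` is optimal for the quadratic cost between `ν` and `ν_s := g_s#ν`, and
`W₂²(ν, ν_s) = ∫‖y − g_s(y)‖² dν = s²∫‖∇φ‖² dν`. -/
theorem pushforward_coupling_optimal
    (φ : E3 → ℝ) (hφ : ContDiff ℝ (⊤ : ℕ∞) φ) (hφc : HasCompactSupport φ) :
    ∃ s₀ > (0:ℝ), ∀ s : ℝ, |s| < s₀ →
      ∀ ν : Measure E3, IsProbabilityMeasure ν → Integrable (fun x => ‖x‖^2) ν →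
        IsCoupling (ν.map (fun y : E3 => (y, y + s • gradient φ y))) ν
            (ν.map (fun y : E3 => y + s • gradient φ y)) ∧
        (∀ γ' : Measure (E3 × E3), IsProbabilityMeasure γ' →
          IsCoupling γ' ν (ν.map (fun y : E3 => y + s • gradient φ y)) →
          (∫ q, ‖q.1 - q.2‖^2 ∂(ν.map (fun y : E3 => (y, y + s • gradient φ y))))
            ≤ ∫ q, ‖q.1 - q.2‖^2 ∂γ') ∧
        W2sq ν (ν.map (fun y : E3 => y + s • gradient φ y))
          = ∫ y, ‖y - (y + s • gradient φ y)‖^2 ∂ν ∧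
        W2sq ν (ν.map (fun y : E3 => y + s • gradient φ y))
          = s^2 * ∫ y, ‖gradient φ y‖^2 ∂ν := by
  obtain ⟨L, hL⟩ := exists_lipschitzWith_gradient (contDiff_infty.1 hφ 2) hφc
  refine ⟨1 / (L + 1), by positivity, fun s hs ν _ hν => ?_⟩
  have hsL : |s| * L ≤ 1 := by
    rw [lt_div_iff₀ (by positivity)] at hs
    linarith [abs_nonneg s]
  exact and_assoc.1 (pushforward_coupling_optimal_general (hφ.differentiable (by simp)) hL hsL ν hν)
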